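/- Let G be a finitely generated discrete group acting by homeomorphisms on a locally compact Hausdorff space X such that the closure of every orbit G•x is compact. Let U ⊆ X be a compact open subset all of whose points are almost periodic. Then there is a finite set K ⊆ G with G•U = K•U. -/

import Mathlib

open Pointwise Filter Topology

/-!
Let `T` be a finite set containing `1` that generates `G` as a monoid, so that the powers `T ^ n`
exhaust `G`. If `T ^ (n + 1) • U ⊆ T ^ n • U` for some `n`, then the sets `T ^ m • U` stop growing
and `G • U = T ^ n • U`. For a single point `x ∈ U`, almost periodicity puts the whole orbit of `x`
into `T ^ n • U` for some `n`, so in particular `T ^ (n + 1) • x ⊆ T ^ n • U`. This last condition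
involves only finitely many group elements, so it is open in `x`, and it persists when `n` grows;
compactness of `U` therefore yields one `n` that works for all `x ∈ U`.
-/

section Monoid

variable {M : Type*} [Monoid M]

theorem finite_pow {s : Set M} (hs : s.Finite) (n : ℕ) : (s ^ n).Finite := by
  classical
  lift s to Finset M using hs
  exact_mod_cast (s ^ n).finite_toSet

theorem exists_mem_pow_of_mem_closure {s : Set M} {x : M} (hx : x ∈ Submonoid.closure s) :
    ∃ n : ℕ, x ∈ s ^ n := by
  induction hx using Submonoid.closure_induction with
  | mem x hx => exact ⟨1, by rwa [pow_one]⟩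
  | one => exact ⟨0, by rw [pow_zero]; exact Set.one_mem_one⟩
  | mul x y _ _ hx hy =>
    obtain ⟨m, hm⟩ := hx
    obtain ⟨n, hn⟩ := hy
    exact ⟨m + n, by rw [pow_add]; exact Set.mul_mem_mul hm hn⟩

theorem exists_subset_pow_of_finite {T K : Set M} (hT : (1 : M) ∈ T)
    (hgen : Submonoid.closure T = ⊤) (hK : K.Finite) : ∃ n : ℕ, K ⊆ T ^ n := by
  lift K to Finset M using hK
  have hmono : Monotone (T ^ · : ℕ → Set M) := fun _ _ => Set.pow_subset_pow_right hT
  exact hmono.directed_le.exists_mem_subset_of_finset_subset_biUnion fun g _ =>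
    Set.mem_iUnion.2 (exists_mem_pow_of_mem_closure (hgen ▸ Submonoid.mem_top g))

variable (M) in
theorem exists_finite_one_mem_closure_eq_top [Monoid.FG M] :
    ∃ T : Set M, T.Finite ∧ (1 : M) ∈ T ∧ Submonoid.closure T = ⊤ := by
  obtain ⟨S, hS, hfin⟩ := Monoid.fg_iff.1 ‹Monoid.FG M›
  exact ⟨insert 1 S, hfin.insert 1, Set.mem_insert 1 S, by rw [Submonoid.closure_insert_one, hS]⟩

variable {α : Type*} [MulAction M α] {T : Set M} {U : Set α}

theorem pow_smul_subset_of_pow_succ_smul_subset {n : ℕ} (hT : (1 : M) ∈ T)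
    (h : T ^ (n + 1) • U ⊆ T ^ n • U) (m : ℕ) : T ^ m • U ⊆ T ^ n • U := by
  induction m with
  | zero => exact Set.smul_subset_smul_right (Set.pow_subset_pow_right hT n.zero_le)
  | succ m ih =>
    calc T ^ (m + 1) • U = T • T ^ m • U := by rw [pow_succ', mul_smul]
      _ ⊆ T • T ^ n • U := Set.smul_subset_smul_left ih
      _ = T ^ (n + 1) • U := by rw [pow_succ', mul_smul]
      _ ⊆ T ^ n • U := h

theorem univ_smul_eq_pow_smul {n : ℕ} (hT : (1 : M) ∈ T) (hgen : Submonoid.closure T = ⊤)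
    (h : T ^ (n + 1) • U ⊆ T ^ n • U) : (Set.univ : Set M) • U = T ^ n • U := by
  refine (Set.smul_subset_iff.2 fun g _ x hx => ?_).antisymm
    (Set.smul_subset_smul_right (Set.subset_univ _))
  obtain ⟨m, hm⟩ := exists_mem_pow_of_mem_closure (hgen ▸ Submonoid.mem_top g)
  exact pow_smul_subset_of_pow_succ_smul_subset hT h m (Set.smul_mem_smul hm hx)

/-- The points `x` whose orbit segment `T ^ (n + 1) • x` already lies in `T ^ n • U`. These sets
increase with `n`, and for a group action they are open when `U` is open and `T` is finite, which
is what the compactness argument needs. -/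
def stablePoints (T : Set M) (U : Set α) (n : ℕ) : Set α :=
  {x | T ^ (n + 1) • {x} ⊆ T ^ n • U}

theorem monotone_stablePoints : Monotone (stablePoints T U) := by
  refine monotone_nat_of_le_succ fun n x hx => ?_
  calc T ^ (n + 1 + 1) • {x} = T • T ^ (n + 1) • {x} := by rw [pow_succ', mul_smul]
    _ ⊆ T • T ^ n • U := Set.smul_subset_smul_left hx
    _ = T ^ (n + 1) • U := by rw [pow_succ', mul_smul]

theorem pow_succ_smul_subset_of_subset_stablePoints {n : ℕ} (h : U ⊆ stablePoints T U n) :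
    T ^ (n + 1) • U ⊆ T ^ n • U :=
  Set.smul_subset_iff.2 fun _ hg _ hx => h hx (Set.smul_mem_smul hg rfl)

theorem exists_mem_stablePoints {K : Set M} {x : α} (hT : (1 : M) ∈ T)
    (hgen : Submonoid.closure T = ⊤) (hK : K.Finite) (hx : MulAction.orbit M x ⊆ K • U) :
    ∃ n, x ∈ stablePoints T U n := by
  obtain ⟨n, hn⟩ := exists_subset_pow_of_finite hT hgen hK
  have horbit : T ^ (n + 1) • {x} ⊆ MulAction.orbit M x := by
    rw [Set.smul_singleton]
    exact Set.image_subset_range _ _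
  exact ⟨n, (horbit.trans hx).trans (Set.smul_subset_smul_right hn)⟩

end Monoid

section Group

variable {G X : Type*} [Group G] [MulAction G X] {U : Set X}

theorem orbit_subset_inv_smul_of_forall_exists_mul_smul_mem {K : Set G} {x : X}
    (h : ∀ g : G, ∃ k ∈ K, (k * g) • x ∈ U) : MulAction.orbit G x ⊆ K⁻¹ • U := by
  rintro _ ⟨g, rfl⟩
  obtain ⟨k, hk, hkx⟩ := h g
  exact ⟨k⁻¹, Set.inv_mem_inv.2 hk, _, hkx, by simp only [mul_smul, inv_smul_smul]⟩

variable [TopologicalSpace X] [ContinuousConstSMul G X]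

theorem isOpen_stablePoints {T : Set G} (hT : T.Finite) (hU : IsOpen U) (n : ℕ) :
    IsOpen (stablePoints T U n) := by
  have h_eq : stablePoints T U n = ⋂ g ∈ T ^ (n + 1), (g • ·) ⁻¹' (T ^ n • U) := by
    ext x
    simp [stablePoints, Set.subset_def]
  rw [h_eq]
  exact (finite_pow hT (n + 1)).isOpen_biInter fun g _ =>
    hU.smul_left.preimage (continuous_const_smul g)

theorem exists_finite_univ_smul_eq_smul [Group.FG G] (hUc : IsCompact U) (hUo : IsOpen U)
    (horbit : ∀ x ∈ U, ∃ K : Set G, K.Finite ∧ MulAction.orbit G x ⊆ K • U) :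
    ∃ K : Set G, K.Finite ∧ (Set.univ : Set G) • U = K • U := by
  obtain ⟨T, hfin, hone, hgen⟩ := exists_finite_one_mem_closure_eq_top G
  have hcover : U ⊆ ⋃ n, stablePoints T U n := fun x hx =>
    let ⟨_, hK, hKx⟩ := horbit x hx
    Set.mem_iUnion.2 (exists_mem_stablePoints hone hgen hK hKx)
  obtain ⟨n, hn⟩ := hUc.elim_directed_cover (stablePoints T U)
    (isOpen_stablePoints hfin hUo) hcover monotone_stablePoints.directed_le
  exact ⟨T ^ n, finite_pow hfin n,
    univ_smul_eq_pow_smul hone hgen (pow_succ_smul_subset_of_subset_stablePoints hn)⟩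

theorem statement13_general [Group.FG G] (hUc : IsCompact U) (hUo : IsOpen U)
    (hreturn : ∀ x ∈ U, ∃ F : Finset G, ∀ g : G, ∃ f ∈ F, (f * g) • x ∈ U) :
    ∃ K : Finset G, (⋃ g : G, g • U) = ⋃ k ∈ K, k • U := by
  obtain ⟨K, hK, hKU⟩ := exists_finite_univ_smul_eq_smul hUc hUo fun x hx =>
    let ⟨F, hF⟩ := hreturn x hx
    ⟨(F : Set G)⁻¹, F.finite_toSet.inv, orbit_subset_inv_smul_of_forall_exists_mul_smul_mem hF⟩
  refine ⟨hK.toFinset, ?_⟩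
  simpa only [← Set.iUnion_smul_set, Set.mem_univ, Set.iUnion_true, Set.Finite.mem_toFinset]
    using hKU

end Group

/-- for a finitely generated discrete group acting on a locally compact
Hausdorff space with compact orbit closures, if `U` is a compact open set consisting
of almost periodic points, then `G • U = K • U` for some finite `K ⊆ G`. -/
theorem statement13 {G X : Type} [Group G] [Group.FG G]
    [TopologicalSpace X] [T2Space X] [LocallyCompactSpace X]
    [MulAction G X] [ContinuousConstSMul G X]
    (hLag : ∀ x : X, IsCompact (closure (MulAction.orbit G x)))
    (U : Set X) (hUc : IsCompact U) (hUo : IsOpen U)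
    (hap : ∀ x ∈ U, ∀ V ∈ 𝓝 x, ∃ F : Finset G, ∀ g : G, ∃ f ∈ F, (f * g) • x ∈ V) :
    ∃ K : Finset G, (⋃ g : G, g • U) = ⋃ k ∈ K, k • U :=
  statement13_general hUc hUo fun x hx => hap x hx U (hUo.mem_nhds hx)
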